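/- Nash-Williams–Tutte theorem: a finite graph G = (V,E) contains M pairwise edge-disjoint spanning trees if and only if for every partition {V₁,…,V_r} of V into r ≥ 2 nonempty blocks, the number of edges of G with endpoints in two different blocks is at least M(r−1). -/

import Mathlib

open SimpleGraph

namespace SimpleGraph

variable {V ι : Type*}

lemma Reachable.of_forall_adj {H K : SimpleGraph V} (h : ∀ a b, H.Adj a b → K.Reachable a b)
    {a b : V} (hab : H.Reachable a b) : K.Reachable a b := by
  obtain ⟨p⟩ := hab
  induction p with
  | nil => exact .rfl
  | cons hadj _ ih => exact (h _ _ hadj).trans ih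

lemma IsAcyclic.not_reachable_deleteEdges {F : SimpleGraph V} (hF : F.IsAcyclic) {x y : V}
    {p : F.Walk x y} (hp : p.IsPath) {e : Sym2 V} (he : e ∈ p.edges) :
    ¬ (F.deleteEdges {e}).Reachable x y := by
  classical
  induction e with | h a b
  rw [reachable_deleteEdges_iff_exists_walk]
  rintro ⟨q, hq⟩
  have heq : p = q.bypass := congrArg Subtype.val ((hF.subsingleton_path x y).elim ⟨p, hp⟩ q.toPath)
  exact hq (q.edges_bypass_subset_edges (heq ▸ he))

/-- A finite graph has at least as many edges as vertices outside a set that meets all of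
its connected components. -/
lemma card_le_ncard_edgeSet_add_card [Finite V] [Nonempty V] (H : SimpleGraph V) (R : Finset V)
    (hR : ∀ v, ∃ w ∈ R, H.Reachable v w) : Nat.card V ≤ H.edgeSet.ncard + R.card := by
  classical
  obtain ⟨r, hr, -⟩ := hR (Classical.arbitrary V)
  let S : Finset (Sym2 V) := (R.erase r).image fun w ↦ s(r, w)
  let K := H ⊔ fromEdgeSet (S : Set (Sym2 V))
  have hreach : ∀ v, K.Reachable r v := by
    intro v
    obtain ⟨w, hw, hvw⟩ := hR v
    refine Reachable.trans ?_ (hvw.mono le_sup_left).symm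
    by_cases h : w = r
    · rw [h]
    · refine Adj.reachable (Or.inr ?_)
      rw [fromEdgeSet_adj]
      exact ⟨Finset.mem_coe.2 (Finset.mem_image_of_mem _ (Finset.mem_erase.2 ⟨h, hw⟩)), Ne.symm h⟩
  have hconn : K.Connected := (connected_iff_exists_forall_reachable _).2 ⟨r, hreach⟩
  have hK : K.edgeSet ⊆ H.edgeSet ∪ S := by
    simp only [K, edgeSet_sup, edgeSet_fromEdgeSet]
    exact Set.union_subset_union_right _ Set.sdiff_subset
  have h₁ := hconn.card_vert_le_card_edgeSet_add_one
  have h₂ := (Set.ncard_le_ncard hK (Set.toFinite _)).trans (Set.ncard_union_le _ _)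
  have h₃ : S.card ≤ (R.erase r).card := Finset.card_image_le
  have h₄ := Finset.card_erase_add_one hr
  rw [Set.ncard_coe_finset] at h₂
  rw [Nat.card_coe_set_eq] at h₁
  omega

lemma IsTree.ncard_edgeSet_add_one [Finite V] {T : SimpleGraph V} (hT : T.IsTree) :
    T.edgeSet.ncard + 1 = Nat.card V := by
  rw [← (isTree_iff_connected_and_card.1 hT).2, Nat.card_coe_set_eq]

lemma IsAcyclic.ncard_edgeSet_add_one_le [Finite V] [Nonempty V] {F : SimpleGraph V}
    (hF : F.IsAcyclic) : F.edgeSet.ncard + 1 ≤ Nat.card V := by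
  obtain ⟨T, hFT, -, hT⟩ := connected_top.exists_isTree_le_of_le_of_isAcyclic le_top hF
  rw [← hT.ncard_edgeSet_add_one]
  exact Nat.add_le_add_right (Set.ncard_le_ncard (edgeSet_mono hFT) (Set.toFinite _)) 1

lemma IsAcyclic.isTree_of_card_le [Finite V] [Nonempty V] {F : SimpleGraph V}
    (hF : F.IsAcyclic) (h : Nat.card V ≤ F.edgeSet.ncard + 1) : F.IsTree := by
  obtain ⟨T, hFT, -, hT⟩ := connected_top.exists_isTree_le_of_le_of_isAcyclic le_top hF
  rw [← hT.ncard_edgeSet_add_one] at h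
  have := Set.eq_of_subset_of_ncard_le (edgeSet_mono hFT) (Nat.le_of_add_le_add_right h)
    (Set.toFinite _)
  rwa [edgeSet_inj.1 this]

/-- A connected graph has at least `r - 1` edges between different parts of a partition
into `r` parts. -/
lemma Connected.card_parts_le_ncard_add_one [Fintype V] [DecidableEq V] {T : SimpleGraph V}
    (hT : T.Connected) (P : Finpartition (Finset.univ : Finset V)) :
    P.parts.card ≤ {e | e ∈ T.edgeSet ∧ ¬∃ p ∈ P.parts, ∀ v ∈ e, v ∈ p}.ncard + 1 := by
  classical
  have := hT.nonempty
  let f : V → P.parts := fun v ↦ ⟨P.part v, P.part_mem.2 (Finset.mem_univ v)⟩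
  have hf : Function.Surjective f := by
    rintro ⟨p, hp⟩
    obtain ⟨v, hv⟩ := P.nonempty_of_mem_parts hp
    exact ⟨v, Subtype.ext (P.part_eq_of_mem hp hv)⟩
  let C : Set (Sym2 V) := {e | e ∈ T.edgeSet ∧ ¬∃ p ∈ P.parts, ∀ v ∈ e, v ∈ p}
  let Q : SimpleGraph P.parts := fromEdgeSet (Sym2.map f '' C)
  have hadj : ∀ a b, T.Adj a b → Q.Reachable (f a) (f b) := by
    intro a b hab
    by_cases h : f a = f b
    · rw [h]
    · refine Adj.reachable ((fromEdgeSet_adj _).2 ⟨⟨s(a, b), ⟨hab, ?_⟩, rfl⟩, h⟩)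
      rintro ⟨p, hp, hv⟩
      refine h (Subtype.ext ?_)
      change P.part a = P.part b
      rw [P.part_eq_of_mem hp (hv a (by simp)), P.part_eq_of_mem hp (hv b (by simp))]
  have hreach : ∀ {a b}, T.Walk a b → Q.Reachable (f a) (f b) := by
    intro a b p
    induction p with
    | nil => exact .rfl
    | cons h _ ih => exact (hadj _ _ h).trans ih
  have hQ : Q.Connected := by
    refine (connected_iff_exists_forall_reachable _).2 ⟨f (Classical.arbitrary V), fun q ↦ ?_⟩
    obtain ⟨v, rfl⟩ := hf q
    exact (hT.preconnected _ v).elim hreach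
  have h₁ := hQ.card_vert_le_card_edgeSet_add_one
  have h₂ : Q.edgeSet.ncard ≤ (Sym2.map f '' C).ncard := by
    refine Set.ncard_le_ncard ?_ (Set.toFinite _)
    simp only [Q, edgeSet_fromEdgeSet]
    exact Set.sdiff_subset
  have h₃ : (Sym2.map f '' C).ncard ≤ C.ncard := Set.ncard_image_le (Set.toFinite _)
  rw [Nat.card_coe_set_eq, Nat.card_eq_fintype_card, Fintype.card_coe] at h₁
  change _ ≤ C.ncard + 1
  omega

/-- A family of pairwise edge-disjoint forests in `G`. -/
structure IsForestPacking (G : SimpleGraph V) (F : ι → SimpleGraph V) : Prop where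
  le : ∀ i, F i ≤ G
  isAcyclic : ∀ i, (F i).IsAcyclic
  disjoint : Pairwise fun i j ↦ Disjoint (F i).edgeSet (F j).edgeSet

/-- The edges of `G` covered by no member of the family `F`. -/
def uncoveredEdges (G : SimpleGraph V) (F : ι → SimpleGraph V) : Set (Sym2 V) :=
  {e | e ∈ G.edgeSet ∧ ∀ i, e ∉ (F i).edgeSet}

/-- A forest packing with the largest possible total number of edges. -/
structure IsMaxForestPacking [Fintype ι] (G : SimpleGraph V) (F : ι → SimpleGraph V) : Prop
    extends IsForestPacking G F where
  sum_le : ∀ F' : ι → SimpleGraph V, IsForestPacking G F' →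
    ∑ i, (F' i).edgeSet.ncard ≤ ∑ i, (F i).edgeSet.ncard

/-- `F'` arises from `F` by adding an uncovered edge `s(x, y)` to some `F i` and removing an edge
of the cycle thereby created. -/
def EdgeExchange [DecidableEq ι] (G : SimpleGraph V) (F F' : ι → SimpleGraph V) : Prop :=
  ∃ (i : ι) (x y : V) (p : (F i).Walk x y) (e : Sym2 V), p.IsPath ∧ e ∈ p.edges ∧
    s(x, y) ∈ uncoveredEdges G F ∧
    F' = Function.update F i ((F i).deleteEdges {e} ⊔ edge x y)

/-- The edges left uncovered by some packing obtained from `F` by successive exchanges. -/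
def exchangeableEdges [DecidableEq ι] (G : SimpleGraph V) (F : ι → SimpleGraph V) :
    Set (Sym2 V) :=
  {e | ∃ F', Relation.ReflTransGen (EdgeExchange G) F F' ∧ e ∈ uncoveredEdges G F'}

lemma IsForestPacking.update [DecidableEq ι] {G : SimpleGraph V} {F : ι → SimpleGraph V}
    (hF : IsForestPacking G F) {i : ι} {x y : V} (hxy : s(x, y) ∈ uncoveredEdges G F)
    {H : SimpleGraph V} (hH : H ≤ F i) (hr : ¬ H.Reachable x y) :
    IsForestPacking G (Function.update F i (H ⊔ edge x y)) := by
  have hle : H ⊔ edge x y ≤ G := sup_le (hH.trans (hF.le i)) ((edge_le_iff _).2 (Or.inr hxy.1))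
  have hdisj : ∀ j, i ≠ j → Disjoint (H ⊔ edge x y).edgeSet (F j).edgeSet := by
    intro j hj
    rw [Set.disjoint_left]
    intro e he hej
    rw [edgeSet_sup] at he
    rcases he with he | he
    · exact Set.disjoint_left.1 (hF.disjoint hj) (edgeSet_mono hH he) hej
    · have : e = s(x, y) := edgeSet_edge_subset he
      exact hxy.2 j (this ▸ hej)
  refine ⟨fun j ↦ ?_, fun j ↦ ?_, fun j k hjk ↦ ?_⟩
  · obtain rfl | hj := eq_or_ne j i
    · simpa using hle
    · simpa [hj] using hF.le j
  · obtain rfl | hj := eq_or_ne j i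
    · simpa using ((hF.isAcyclic j).anti hH).sup_edge_of_not_reachable hr
    · simpa [hj] using hF.isAcyclic j
  · obtain rfl | hj := eq_or_ne j i
    · simpa [hjk.symm] using hdisj k hjk
    · obtain rfl | hk := eq_or_ne k i
      · simpa [hj] using (hdisj j hjk.symm).symm
      · simpa [hj, hk] using hF.disjoint hjk

lemma IsMaxForestPacking.reachable [Finite V] [Fintype ι] [DecidableEq ι] {G : SimpleGraph V}
    {F : ι → SimpleGraph V} (hF : IsMaxForestPacking G F) {x y : V}
    (hxy : s(x, y) ∈ uncoveredEdges G F) (i : ι) : (F i).Reachable x y := by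
  by_contra hr
  have hne : x ≠ y := Adj.ne hxy.1
  have hlt := hF.sum_le _ (hF.toIsForestPacking.update hxy le_rfl hr)
  refine hlt.not_gt (Finset.sum_lt_sum (fun j _ ↦ ?_) ⟨i, Finset.mem_univ i, ?_⟩)
  · obtain rfl | hj := eq_or_ne j i
    · simp only [Function.update_self]
      exact Set.ncard_le_ncard (edgeSet_mono le_sup_left) (Set.toFinite _)
    · simp [hj]
  · simp only [Function.update_self]
    refine Set.ncard_lt_ncard (edgeSet_ssubset_edgeSet.2 (lt_of_le_not_ge le_sup_left fun h ↦ ?_))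
      (Set.toFinite _)
    exact hxy.2 i (h (Or.inr ((edge_adj ..).2 ⟨by simp, hne⟩)))

lemma IsMaxForestPacking.edgeExchange [Finite V] [Fintype ι] [DecidableEq ι] {G : SimpleGraph V}
    {F F' : ι → SimpleGraph V} (hF : IsMaxForestPacking G F) (h : EdgeExchange G F F') :
    IsMaxForestPacking G F' := by
  obtain ⟨i, x, y, p, e, hp, he, hxy, rfl⟩ := h
  refine ⟨hF.toIsForestPacking.update hxy (deleteEdges_le _)
    ((hF.isAcyclic i).not_reachable_deleteEdges hp he), fun F' hF' ↦ (hF.sum_le F' hF').trans_eq ?_⟩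
  refine Finset.sum_congr rfl fun j _ ↦ ?_
  obtain rfl | hj := eq_or_ne j i
  · have hne : x ≠ y := Adj.ne hxy.1
    rw [Function.update_self, edgeSet_sup, edgeSet_edge_of_ne hne, edgeSet_deleteEdges,
      Set.union_singleton, Set.ncard_exchange (hxy.2 j) (p.edges_subset_edgeSet he)]
  · simp [hj]

lemma IsMaxForestPacking.reflTransGen [Finite V] [Fintype ι] [DecidableEq ι] {G : SimpleGraph V}
    {F F' : ι → SimpleGraph V} (hF : IsMaxForestPacking G F)
    (h : Relation.ReflTransGen (EdgeExchange G) F F') : IsMaxForestPacking G F' := by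
  induction h with
  | refl => exact hF
  | tail _ h ih => exact ih.edgeExchange h

lemma IsMaxForestPacking.reachable_inf_of_uncovered [Finite V] [Fintype ι] [DecidableEq ι]
    {G : SimpleGraph V} {F F' : ι → SimpleGraph V} (hF : IsMaxForestPacking G F)
    (h : Relation.ReflTransGen (EdgeExchange G) F F') {x y : V}
    (hxy : s(x, y) ∈ uncoveredEdges G F') (i : ι) :
    (F' i ⊓ fromEdgeSet (exchangeableEdges G F)).Reachable x y := by
  have hF' := hF.reflTransGen h
  obtain ⟨p, hp⟩ := (hF'.reachable hxy i).exists_isPath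
  refine ⟨p.transfer _ fun e he ↦ ?_⟩
  have hei := p.edges_subset_edgeSet he
  rw [edgeSet_inf, edgeSet_fromEdgeSet]
  refine ⟨hei, ⟨_, h.tail ⟨i, x, y, p, e, hp, he, hxy, rfl⟩, edgeSet_mono (hF'.le i) hei,
    fun j hj ↦ ?_⟩, not_isDiag_of_mem_edgeSet _ hei⟩
  obtain rfl | hji := eq_or_ne j i
  · rw [Function.update_self, edgeSet_sup, edgeSet_deleteEdges] at hj
    rcases hj with hj | hj
    · exact hj.2 rfl
    · have : e = s(x, y) := edgeSet_edge_subset hj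
      exact hxy.2 j (this ▸ hei)
  · rw [Function.update_of_ne hji] at hj
    exact Set.disjoint_left.1 (hF'.disjoint hji) hj hei

lemma IsMaxForestPacking.reachable_inf_of_reflTransGen [Finite V] [Fintype ι] [DecidableEq ι]
    {G : SimpleGraph V} {F F' : ι → SimpleGraph V} (hF : IsMaxForestPacking G F)
    (h : Relation.ReflTransGen (EdgeExchange G) F F') (i : ι) {a b : V}
    (hab : (F' i ⊓ fromEdgeSet (exchangeableEdges G F)).Reachable a b) :
    (F i ⊓ fromEdgeSet (exchangeableEdges G F)).Reachable a b := by
  induction h generalizing a b with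
  | refl => exact hab
  | tail h hstep ih =>
    refine ih (Reachable.of_forall_adj (fun u v huv ↦ ?_) hab)
    obtain ⟨j, x, y, p, e, hp, he, hxy, rfl⟩ := hstep
    obtain rfl | hij := eq_or_ne i j
    · rw [Function.update_self] at huv
      obtain ⟨huv | huv, hU⟩ := huv
      · exact Adj.reachable ⟨deleteEdges_le _ huv, hU⟩
      · have hr := hF.reachable_inf_of_uncovered h hxy i
        rcases (edge_adj ..).1 huv with ⟨⟨rfl, rfl⟩ | ⟨rfl, rfl⟩, -⟩
        · exact hr
        · exact hr.symm
    · rw [Function.update_of_ne hij] at huv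
      exact huv.reachable

/-- Every member of a maximum forest packing spans the exchangeable edges using exchangeable
edges only. -/
lemma IsMaxForestPacking.reachable_inf [Finite V] [Fintype ι] [DecidableEq ι]
    {G : SimpleGraph V} {F : ι → SimpleGraph V} (hF : IsMaxForestPacking G F) (i : ι) {a b : V}
    (hab : (fromEdgeSet (exchangeableEdges G F)).Reachable a b) :
    (F i ⊓ fromEdgeSet (exchangeableEdges G F)).Reachable a b := by
  refine Reachable.of_forall_adj (fun u v huv ↦ ?_) hab
  obtain ⟨F', h, huv⟩ := ((fromEdgeSet_adj _).1 huv).1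
  exact hF.reachable_inf_of_reflTransGen h i (hF.reachable_inf_of_uncovered h huv i)

lemma exists_isMaxForestPacking [Finite V] [Fintype ι] (G : SimpleGraph V) :
    ∃ F : ι → SimpleGraph V, IsMaxForestPacking G F := by
  have hne : {F : ι → SimpleGraph V | IsForestPacking G F}.Nonempty :=
    ⟨fun _ ↦ ⊥, fun _ ↦ bot_le, fun _ ↦ isAcyclic_bot, fun _ _ _ ↦ by simp⟩
  obtain ⟨F, hF, hmax⟩ := Set.exists_max_image _ (fun F ↦ ∑ i, (F i).edgeSet.ncard)
    (Set.toFinite _) hne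
  exact ⟨F, hF, hmax⟩

/-- The partition into the components of the exchangeable edges of a maximum forest packing
bounds the size of the packing from below. -/
lemma IsMaxForestPacking.exists_finpartition [Fintype V] [DecidableEq V] [Nonempty V] [Fintype ι]
    {G : SimpleGraph V} {F : ι → SimpleGraph V} (hF : IsMaxForestPacking G F) :
    ∃ P : Finpartition (Finset.univ : Finset V),
      {e | e ∈ G.edgeSet ∧ ¬∃ p ∈ P.parts, ∀ v ∈ e, v ∈ p}.ncard + Fintype.card ι * Nat.card V ≤
        ∑ i, (F i).edgeSet.ncard + Fintype.card ι * P.parts.card := by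
  classical
  let U := exchangeableEdges G F
  let P := Finpartition.ofSetoid (fromEdgeSet U).reachableSetoid
  have hP : ∀ a b, b ∈ P.part a ↔ (fromEdgeSet U).Reachable a b := fun a b ↦
    Finpartition.mem_part_ofSetoid_iff_rel
  refine ⟨P, ?_⟩
  have hspan : ∀ i, Nat.card V ≤ (F i ⊓ fromEdgeSet U).edgeSet.ncard + P.parts.card := by
    intro i
    let rep : P.parts → V := fun p ↦ (P.nonempty_of_mem_parts p.2).choose
    have hrep : ∀ p : P.parts, rep p ∈ p.1 := fun p ↦ (P.nonempty_of_mem_parts p.2).choose_spec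
    have hle := card_le_ncard_edgeSet_add_card (F i ⊓ fromEdgeSet U)
      (Finset.univ.image rep) fun v ↦ by
        let p : P.parts := ⟨P.part v, P.part_mem.2 (Finset.mem_univ v)⟩
        exact ⟨rep p, Finset.mem_image_of_mem _ (Finset.mem_univ p),
          hF.reachable_inf i ((hP v _).1 (hrep p))⟩
    have hcard : (Finset.univ.image rep).card ≤ P.parts.card :=
      Finset.card_image_le.trans_eq (by simp)
    omega
  have hcross : {e | e ∈ G.edgeSet ∧ ¬∃ p ∈ P.parts, ∀ v ∈ e, v ∈ p}.ncard ≤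
      ∑ i, ((F i).edgeSet \ (F i ⊓ fromEdgeSet U).edgeSet).ncard := by
    have hsub : {e | e ∈ G.edgeSet ∧ ¬∃ p ∈ P.parts, ∀ v ∈ e, v ∈ p} ⊆
        ⋃ i, (F i).edgeSet \ (F i ⊓ fromEdgeSet U).edgeSet := by
      rintro e ⟨heG, he⟩
      have heU : e ∉ U := by
        induction e with | h a b
        intro hab
        refine he ⟨P.part a, P.part_mem.2 (Finset.mem_univ a), fun v hv ↦ (hP a v).2 ?_⟩
        rcases Sym2.mem_iff.1 hv with rfl | rfl
        · exact .rfl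
        · exact Adj.reachable ((fromEdgeSet_adj _).2 ⟨hab, Adj.ne heG⟩)
      have : ∃ i, e ∈ (F i).edgeSet := by
        by_contra! h
        exact heU ⟨F, .refl, heG, h⟩
      obtain ⟨i, hi⟩ := this
      refine Set.mem_iUnion.2 ⟨i, hi, fun h ↦ heU ?_⟩
      rw [edgeSet_inf, edgeSet_fromEdgeSet] at h
      exact h.2.1
    exact (Set.ncard_le_ncard hsub (Set.toFinite _)).trans (Set.ncard_iUnion_le_of_fintype _)
  have hsplit : ∀ i, ((F i).edgeSet \ (F i ⊓ fromEdgeSet U).edgeSet).ncard +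
      (F i ⊓ fromEdgeSet U).edgeSet.ncard = (F i).edgeSet.ncard := fun i ↦
    Set.ncard_sdiff_add_ncard_of_subset (edgeSet_mono inf_le_left) (Set.toFinite _)
  have hsum := Finset.sum_le_sum fun i (_ : i ∈ Finset.univ) ↦ hspan i
  have hsplit' := Finset.sum_congr rfl fun i (_ : i ∈ Finset.univ) ↦ hsplit i
  simp only [Finset.sum_add_distrib, Finset.sum_const, Finset.card_univ, smul_eq_mul]
    at hsum hsplit'
  omega

end SimpleGraph

theorem nash_williams_tutte
    {V : Type*} [Fintype V] [DecidableEq V] [Nonempty V]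
    (G : SimpleGraph V) (M : ℕ) :
    (∃ T : Fin M → SimpleGraph V, (∀ i, T i ≤ G) ∧ (∀ i, (T i).IsTree) ∧
        Pairwise fun i j => Disjoint (T i).edgeSet (T j).edgeSet) ↔
      ∀ P : Finpartition (Finset.univ : Finset V), 2 ≤ P.parts.card →
        M * (P.parts.card - 1) ≤
          {e | e ∈ G.edgeSet ∧ ¬∃ p ∈ P.parts, ∀ v ∈ e, v ∈ p}.ncard := by
  constructor
  · rintro ⟨T, hle, hT, hdisj⟩ P -
    let C : Fin M → Set (Sym2 V) := fun i ↦
      {e | e ∈ (T i).edgeSet ∧ ¬∃ p ∈ P.parts, ∀ v ∈ e, v ∈ p}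
    have hC : ∀ i, P.parts.card - 1 ≤ (C i).ncard := fun i ↦
      Nat.sub_le_of_le_add ((hT i).connected.card_parts_le_ncard_add_one P)
    have hCdisj : Pairwise (Function.onFun Disjoint C) := fun i j hij ↦
      (hdisj hij).mono (fun _ h ↦ h.1) (fun _ h ↦ h.1)
    calc M * (P.parts.card - 1) = ∑ _i : Fin M, (P.parts.card - 1) := by simp
      _ ≤ ∑ i, (C i).ncard := Finset.sum_le_sum fun i _ ↦ hC i
      _ = (⋃ i, C i).ncard := by
        rw [Set.ncard_iUnion_of_finite (fun i ↦ Set.toFinite _) hCdisj, finsum_eq_sum_of_fintype]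
      _ ≤ _ := Set.ncard_le_ncard
        (Set.iUnion_subset fun i _ (h : _ ∈ C i) ↦ And.intro (edgeSet_mono (hle i) h.1) h.2)
        (Set.toFinite _)
  · intro h
    obtain ⟨F, hF⟩ := exists_isMaxForestPacking (ι := Fin M) G
    obtain ⟨P, hP⟩ := hF.exists_finpartition
    have hPcard : 1 ≤ P.parts.card :=
      Finset.card_pos.2 ⟨_, P.part_mem.2 (Finset.mem_univ (Classical.arbitrary V))⟩
    have hcross : M * (P.parts.card - 1) ≤
        {e | e ∈ G.edgeSet ∧ ¬∃ p ∈ P.parts, ∀ v ∈ e, v ∈ p}.ncard := by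
      obtain h2 | h2 := le_or_gt 2 P.parts.card
      · exact h P h2
      · simp [show P.parts.card - 1 = 0 by omega]
    have hup := fun i ↦ (hF.isAcyclic i).ncard_edgeSet_add_one_le
    have hlow : ∑ _i : Fin M, Nat.card V ≤ ∑ i, ((F i).edgeSet.ncard + 1) := by
      obtain ⟨c, hc⟩ := Nat.exists_eq_add_of_le' hPcard
      rw [hc, Nat.add_sub_cancel] at hcross
      rw [hc, Fintype.card_fin, Nat.mul_add, Nat.mul_one] at hP
      simp only [Finset.sum_add_distrib, Finset.sum_const, Finset.card_univ, Fintype.card_fin,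
        smul_eq_mul, mul_one]
      omega
    have heq := (Finset.sum_eq_sum_iff_of_le fun i _ ↦ hup i).1
      ((Finset.sum_le_sum fun i _ ↦ hup i).antisymm hlow)
    exact ⟨F, hF.le, fun i ↦ (hF.isAcyclic i).isTree_of_card_le (heq i (Finset.mem_univ i)).ge,
      hF.disjoint⟩
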